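/- arXiv:1812.09762 — 3 statements merged into one kernel-verified Lean document; each statement's English description precedes it below -/
import Mathlib

section
/- Let T ⊆ List ℕ be a tree and T* = T⁺ ∪ { σ ++ [0] | σ ∈ T⁺ } where T⁺ = { σ.map (· + 1) | σ ∈ T }. Then T has at most one infinite path if and only if T* has at most one infinite path. -/
/-- A tree is a set of finite sequences of naturals closed under initial segments. -/
def IsTree (T : Set (List ℕ)) : Prop :=
  ∀ σ ∈ T, ∀ τ : List ℕ, τ <+: σ → τ ∈ T

/-- An infinite path of `T`: every finite initial segment belongs to `T`. -/
def IsPath (T : Set (List ℕ)) (p : ℕ → ℕ) : Prop :=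
  ∀ n : ℕ, (List.ofFn fun i : Fin n => p i) ∈ T

/-!
Relabelling along an injective `f` makes `p ↦ f ∘ p` a bijection from the infinite paths of `T` to
those of its image. Adding a leaf with a fresh label `a` above every member creates no new infinite
path: the initial segment of length `n + 1` of a path can contain `a` only as its last entry, so the
one of length `n` avoids `a` and was there before. The theorem is the case `f = (· + 1)`, `a = 0`.
-/

/-- The extension of a set `S` of finite sequences by a leaf labelled `a` above each of its members.
The set `T*` is encoded as `withLeaves 0 T⁺`. -/
def withLeaves {α : Type*} (a : α) (S : Set (List α)) : Set (List α) :=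
  S ∪ {l | ∃ σ ∈ S, l = σ ++ [a]}

section Leaves

variable {α : Type*} {S : Set (List α)} {a : α}

theorem mem_of_mem_withLeaves_of_notMem {l : List α} (hl : l ∈ withLeaves a S) (ha : a ∉ l) :
    l ∈ S := by
  obtain hl | ⟨σ, -, rfl⟩ := hl
  · exact hl
  · exact absurd List.mem_concat_self ha

theorem notMem_of_concat_mem_withLeaves (hS : ∀ σ ∈ S, a ∉ σ) {l : List α} {b : α}
    (hl : l ++ [b] ∈ withLeaves a S) : a ∉ l := by
  obtain hl | ⟨σ, hσ, heq⟩ := hl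
  · exact fun ha => hS _ hl (List.mem_append_left [b] ha)
  · rw [List.append_inj_left' heq rfl]
    exact hS σ hσ

end Leaves

theorem isPath_withLeaves_iff {S : Set (List ℕ)} {a : ℕ} (hS : ∀ σ ∈ S, a ∉ σ) {p : ℕ → ℕ} :
    IsPath (withLeaves a S) p ↔ IsPath S p := by
  refine ⟨fun hp n => mem_of_mem_withLeaves_of_notMem (hp n) ?_, fun hp n => Or.inl (hp n)⟩
  have hsucc := hp (n + 1)
  rw [List.ofFn_succ_last] at hsucc
  exact notMem_of_concat_mem_withLeaves hS hsucc

theorem isPath_image_map_iff {f : ℕ → ℕ} (hf : Function.Injective f) {T : Set (List ℕ)}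
    {p : ℕ → ℕ} : IsPath (List.map f '' T) p ↔ ∃ q, IsPath T q ∧ f ∘ q = p := by
  constructor
  · intro hp
    have mem_range : ∀ i, ∃ k, f k = p i := by
      intro i
      obtain ⟨σ, -, hσ⟩ := hp (i + 1)
      have hi : p i ∈ σ.map f := hσ ▸ List.mem_ofFn.2 ⟨Fin.last i, rfl⟩
      obtain ⟨k, -, hk⟩ := List.mem_map.1 hi
      exact ⟨k, hk⟩
    choose q hq using mem_range
    obtain rfl : f ∘ q = p := funext hq
    refine ⟨q, fun n => ?_, rfl⟩
    rw [← hf.list_map.mem_set_image, List.map_ofFn]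
    exact hp n
  · rintro ⟨q, hq, rfl⟩ n
    exact ⟨_, hq n, List.map_ofFn⟩

theorem isPath_withLeaves_image_map_iff {f : ℕ → ℕ} (hf : Function.Injective f) {a : ℕ}
    (ha : a ∉ Set.range f) {T : Set (List ℕ)} {p : ℕ → ℕ} :
    IsPath (withLeaves a (List.map f '' T)) p ↔ ∃ q, IsPath T q ∧ f ∘ q = p := by
  have notMem : ∀ σ ∈ List.map f '' T, a ∉ σ := by
    rintro _ ⟨σ, -, rfl⟩ haσ
    obtain ⟨k, -, hk⟩ := List.mem_map.1 haσ
    exact ha ⟨k, hk⟩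
  rw [isPath_withLeaves_iff notMem, isPath_image_map_iff hf]

theorem star_at_most_one_path_general {f : ℕ → ℕ} (hf : Function.Injective f) {a : ℕ}
    (ha : a ∉ Set.range f) (T : Set (List ℕ)) :
    (∀ p q : ℕ → ℕ, IsPath T p → IsPath T q → p = q) ↔
      (∀ p q : ℕ → ℕ, IsPath (withLeaves a (List.map f '' T)) p →
        IsPath (withLeaves a (List.map f '' T)) q → p = q) := by
  simp only [isPath_withLeaves_image_map_iff hf ha]
  constructor
  · rintro unique _ _ ⟨p, hp, rfl⟩ ⟨q, hq, rfl⟩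
    rw [unique p q hp hq]
  · exact fun unique p q hp hq => hf.comp_left (unique _ _ ⟨p, hp, rfl⟩ ⟨q, hq, rfl⟩)

theorem star_at_most_one_path (T Tp Ts : Set (List ℕ)) (hT : IsTree T)
    (hTp : Tp = (List.map (· + 1)) '' T)
    (hTs : Ts = Tp ∪ {l : List ℕ | ∃ σ ∈ Tp, l = σ ++ [0]}) :
    (∀ p q : ℕ → ℕ, IsPath T p → IsPath T q → p = q) ↔
      (∀ p q : ℕ → ℕ, IsPath Ts p → IsPath Ts q → p = q) := by
  subst hTp hTs
  exact star_at_most_one_path_general (add_left_injective 1) (by simp) T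
end

section
/- Let T ⊆ List ℕ be a tree and T* = T⁺ ∪ { σ ++ [0] | σ ∈ T⁺ } where T⁺ = { σ.map (· + 1) | σ ∈ T }. Then every perfect subtree of T* is of the form S⁺ = { σ + 1 | σ ∈ S } for some perfect subtree S of T; in particular, no element of a perfect subtree of T* has an entry equal to 0. -/
/-- Two sequences are incompatible if neither is a prefix of the other. -/
def Incomp (σ τ : List ℕ) : Prop :=
  ¬ σ <+: τ ∧ ¬ τ <+: σ

/-- `S` is a perfect subtree of `T`: a subtree each of whose elements has
two incompatible extensions in `S`. -/
def IsPerfectSubtree (T S : Set (List ℕ)) : Prop :=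
  IsTree S ∧ S ⊆ T ∧
    ∀ σ ∈ S, ∃ τ₁ ∈ S, ∃ τ₂ ∈ S, σ <+: τ₁ ∧ σ <+: τ₂ ∧ Incomp τ₁ τ₂

/-! Since `0` is not an entry of any sequence in `T⁺`, the sequences `σ ++ [0]` are leaves of `T*`.
A perfect tree has no leaves, so a perfect subtree of `T*` lies in `T⁺`, and it can be pulled back
to `T` along the prefix embedding `σ ↦ σ + 1`. -/

open Function

section Lists

variable {α β : Type*}

theorem eq_concat_of_concat_prefix {A : Set (List α)} {σ τ : List α} {a : α} (hA : ∀ ρ ∈ A, a ∉ ρ)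
    (hτ : τ ∈ A ∪ {l | ∃ ρ ∈ A, l = ρ ++ [a]}) (hστ : σ ++ [a] <+: τ) : τ = σ ++ [a] := by
  have mem_of_prefix {ρ : List α} (h : σ ++ [a] <+: ρ) : a ∈ ρ := h.subset List.mem_concat_self
  rcases hτ with hτ | ⟨ρ, hρ, rfl⟩
  · exact absurd (mem_of_prefix hστ) (hA τ hτ)
  · rcases List.prefix_concat_iff.1 hστ with heq | hσρ
    · exact heq.symm
    · exact absurd (mem_of_prefix hσρ) (hA ρ hρ)

theorem notMem_of_mem_image_map {f : α → β} {T : Set (List α)} {σ : List β} {b : β}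
    (hb : b ∉ Set.range f) (hσ : σ ∈ List.map f '' T) : b ∉ σ := by
  obtain ⟨ρ, -, rfl⟩ := hσ
  intro hmem
  obtain ⟨x, -, hx⟩ := List.mem_map.1 hmem
  exact hb ⟨x, hx⟩

end Lists

section PerfectSubtrees

variable {f : ℕ → ℕ} {a : ℕ} {σ τ : List ℕ} {A T P : Set (List ℕ)}

theorem incomp_map_iff (hf : Injective f) : Incomp (σ.map f) (τ.map f) ↔ Incomp σ τ := by
  simp only [Incomp, List.prefix_map_iff_of_injective hf]

theorem IsTree.preimage_map (hP : IsTree P) (f : ℕ → ℕ) : IsTree (List.map f ⁻¹' P) :=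
  fun _ hσ _ hτσ => hP _ hσ _ (hτσ.map f)

namespace IsPerfectSubtree

theorem exists_prefix_ne (hP : IsPerfectSubtree T P) (hσ : σ ∈ P) :
    ∃ τ ∈ P, σ <+: τ ∧ τ ≠ σ := by
  obtain ⟨τ₁, hτ₁, τ₂, -, hστ₁, hστ₂, hincomp⟩ := hP.2.2 σ hσ
  refine ⟨τ₁, hτ₁, hστ₁, ?_⟩
  rintro rfl
  exact hincomp.1 hστ₂

theorem exists_eq_image_map (hf : Injective f) (hP : IsPerfectSubtree (List.map f '' T) P) :
    ∃ S, IsPerfectSubtree T S ∧ P = List.map f '' S := by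
  obtain ⟨htree, hsub, hperfect⟩ := hP
  refine ⟨List.map f ⁻¹' P, ⟨htree.preimage_map f, ?_, fun σ hσ => ?_⟩, ?_⟩
  · exact (Set.preimage_mono hsub).trans (Set.preimage_image_eq T hf.list_map).subset
  · obtain ⟨τ₁, hτ₁, τ₂, hτ₂, hστ₁, hστ₂, hincomp⟩ := hperfect _ hσ
    obtain ⟨ρ₁, -, rfl⟩ := hsub hτ₁
    obtain ⟨ρ₂, -, rfl⟩ := hsub hτ₂
    exact ⟨ρ₁, hτ₁, ρ₂, hτ₂, (List.prefix_map_iff_of_injective hf).1 hστ₁,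
      (List.prefix_map_iff_of_injective hf).1 hστ₂, (incomp_map_iff hf).1 hincomp⟩
  · exact (Set.image_preimage_eq_of_subset (hsub.trans (Set.image_subset_range _ _))).symm

theorem of_union_concat (hA : ∀ ρ ∈ A, a ∉ ρ)
    (hP : IsPerfectSubtree (A ∪ {l | ∃ ρ ∈ A, l = ρ ++ [a]}) P) : IsPerfectSubtree A P := by
  refine ⟨hP.1, fun σ hσ => ?_, hP.2.2⟩
  rcases hP.2.1 hσ with hσA | ⟨ρ, -, rfl⟩
  · exact hσA
  · obtain ⟨τ, hτ, hρτ, hne⟩ := hP.exists_prefix_ne hσ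
    exact absurd (eq_concat_of_concat_prefix hA (hP.2.1 hτ) hρτ) hne

end IsPerfectSubtree

theorem star_perfect_subtrees_form_general (hf : Injective f) (ha : a ∉ Set.range f)
    (hP : IsPerfectSubtree
      (List.map f '' T ∪ {l | ∃ σ ∈ List.map f '' T, l = σ ++ [a]}) P) :
    (∃ S, IsPerfectSubtree T S ∧ P = List.map f '' S) ∧ ∀ σ ∈ P, a ∉ σ := by
  have hP' : IsPerfectSubtree (List.map f '' T) P :=
    hP.of_union_concat fun _ => notMem_of_mem_image_map ha
  exact ⟨hP'.exists_eq_image_map hf, fun _ hσ => notMem_of_mem_image_map ha (hP'.2.1 hσ)⟩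

end PerfectSubtrees

theorem star_perfect_subtrees_form (T Tp Ts : Set (List ℕ)) (hT : IsTree T)
    (hTp : Tp = (List.map (· + 1)) '' T)
    (hTs : Ts = Tp ∪ {l : List ℕ | ∃ σ ∈ Tp, l = σ ++ [0]}) :
    ∀ P : Set (List ℕ), IsPerfectSubtree Ts P →
      (∃ S : Set (List ℕ), IsPerfectSubtree T S ∧ P = (List.map (· + 1)) '' S) ∧
        ∀ σ ∈ P, (0 : ℕ) ∉ σ := by
  subst hTp hTs
  exact fun _ => star_perfect_subtrees_form_general (add_left_injective 1) (by simp)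
end

section
/- Let T ⊆ List ℕ be a nonempty tree. Define a hypergraph H as follows. The vertices of H are five distinguished vertices a₀, a₁, b₀, b₁, s together with two vertices σ₀ and σ₁ for each σ ∈ T. The edges of H are: the pairs {a₀, a₁}, {a₁, s}, {b₀, b₁}, {b₁, s}; the pair {σ₀, σ₁} for every nonempty σ ∈ T; the pair {σ₁, s} for every leaf σ of T; the set E_σ = {σ₁} ∪ { τ₀ | τ ∈ T and τ = σ ++ [n] for some n } for every σ ∈ T that is not a leaf; and the set E₀ = {a₀, b₀} ∪ { σ₀ | σ ∈ T and σ.length = 1 }. Then H has a proper 2-coloring if and only if T has an infinite path. -/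
/-- The vertices of the hypergraph: five distinguished vertices
`a₀ = inl 0`, `a₁ = inl 1`, `b₀ = inl 2`, `b₁ = inl 3`, `s = inl 4`,
together with vertices `σ₀ = inr (σ, false)` and `σ₁ = inr (σ, true)`
for sequences `σ`. -/
abbrev Vtx : Type := Fin 5 ⊕ (List ℕ × Bool)

/-!
Fix a proper 2-coloring and compare every color with that of `s`. The gadget edges force `a₀` and
`b₀` to have the color of `s`, so the root edge yields a node `σ` of length one with `σ₀` colored
unlike `s`. Whenever `σ₀` is colored unlike `s`, its partner `σ₁` has the color of `s`; hence `σ` is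
not a leaf, and the edge at `σ` yields a child `τ` with `τ₀` again colored unlike `s`. Iterating
produces an infinite path. Conversely, given an infinite path, color `σ₀` unlike `s` exactly when
`σ` lies on the path.
-/

section Coloring

variable {V C : Type*} {f : V → C} {x y : V} {A : Set V}

/-- An edge `e` is properly colored by `f` if it has at most one vertex or contains two vertices of
different colors. -/
def IsProperOn (f : V → C) (e : Set V) : Prop :=
  e.Nontrivial → ∃ u ∈ e, ∃ v ∈ e, u ≠ v ∧ f u ≠ f v

/-- A proper coloring of the hypergraph whose set of edges is `E`. -/
def IsProperColoring (E : Set (Set V)) (f : V → C) : Prop :=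
  ∀ e ∈ E, IsProperOn f e

theorem isProperColoring_union_iff {E F : Set (Set V)} :
    IsProperColoring (E ∪ F) f ↔ IsProperColoring E f ∧ IsProperColoring F f :=
  forall₂_or_left

theorem isProperColoring_singleton_iff {e : Set V} : IsProperColoring {e} f ↔ IsProperOn f e :=
  forall_eq

theorem isProperColoring_insert_iff {E : Set (Set V)} {e : Set V} :
    IsProperColoring (insert e E) f ↔ IsProperOn f e ∧ IsProperColoring E f :=
  Set.forall_mem_insert

theorem isProperColoring_family_iff {ι : Type*} {I : Set ι} {P : ι → Prop} {g : ι → Set V} :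
    IsProperColoring {e | ∃ i ∈ I, P i ∧ e = g i} f ↔ ∀ i ∈ I, P i → IsProperOn f (g i) := by
  constructor
  · exact fun h i hi hPi => h (g i) ⟨i, hi, hPi, rfl⟩
  · rintro h _ ⟨i, hi, hPi, rfl⟩
    exact h i hi hPi

theorem isProperOn_insert_iff (hA : (insert x A).Nontrivial) :
    IsProperOn f (insert x A) ↔ ∃ y ∈ A, f x ≠ f y := by
  constructor
  · intro h
    obtain ⟨u, hu, v, hv, -, huv⟩ := h hA
    by_contra! hmono
    have eq_color : ∀ w ∈ insert x A, f x = f w := Set.forall_mem_insert.2 ⟨rfl, hmono⟩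
    exact huv ((eq_color u hu).symm.trans (eq_color v hv))
  · rintro ⟨y, hy, hxy⟩ -
    exact ⟨x, A.mem_insert x, y, A.mem_insert_of_mem x hy, ne_of_apply_ne f hxy, hxy⟩

theorem isProperOn_pair_iff (hxy : x ≠ y) : IsProperOn f {x, y} ↔ f x ≠ f y := by
  simp [isProperOn_insert_iff (Set.nontrivial_pair hxy)]

theorem fin_two_eq_of_ne_of_ne {a b c : Fin 2} (hab : a ≠ b) (hbc : b ≠ c) : a = c := by
  omega

end Coloring

section InitialSegment

variable {α : Type*}

/-- The initial segment `[p 0, …, p (n - 1)]` of an infinite sequence. -/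
def initialSegment (p : ℕ → α) (n : ℕ) : List α :=
  List.ofFn fun i : Fin n => p i

theorem initialSegment_zero (p : ℕ → α) : initialSegment p 0 = [] :=
  List.ofFn_zero

theorem initialSegment_succ (p : ℕ → α) (n : ℕ) :
    initialSegment p (n + 1) = initialSegment p n ++ [p n] :=
  List.ofFn_succ_last

theorem mem_range_initialSegment_of_append_singleton {p : ℕ → α} {σ : List α} {a : α}
    (h : σ ++ [a] ∈ Set.range (initialSegment p)) : σ ∈ Set.range (initialSegment p) := by
  obtain ⟨_ | n, hn⟩ := h
  · simp [initialSegment_zero] at hn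
  · rw [initialSegment_succ] at hn
    exact ⟨n, List.append_inj_left' hn rfl⟩

theorem exists_forall_initialSegment_mem {M : Set (List α)} (nil_mem : [] ∈ M)
    (exists_append_mem : ∀ σ ∈ M, ∃ a, σ ++ [a] ∈ M) :
    ∃ p : ℕ → α, ∀ n, initialSegment p n ∈ M := by
  have : Nonempty α := (exists_append_mem [] nil_mem).nonempty
  choose! child append_child_mem using exists_append_mem
  let node (n : ℕ) : List α := (fun σ => σ ++ [child σ])^[n] []
  have node_succ (n : ℕ) : node (n + 1) = node n ++ [child (node n)] :=
    Function.iterate_succ_apply' ..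
  have node_mem (n : ℕ) : node n ∈ M := by
    induction n with
    | zero => exact nil_mem
    | succ n ih => exact node_succ n ▸ append_child_mem _ ih
  have initialSegment_eq (n : ℕ) : initialSegment (child ∘ node) n = node n := by
    induction n with
    | zero => exact initialSegment_zero _
    | succ n ih => rw [initialSegment_succ, ih, node_succ, Function.comp_apply]
  exact ⟨child ∘ node, fun n => initialSegment_eq n ▸ node_mem n⟩

end InitialSegment

section TreeHypergraph

variable {α C : Type*} {T M : Set (List α)}

/-- The vertices of the hypergraph of a set of sequences over `α`, encoded as in `Vtx`, which is the
case `α = ℕ`. -/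
abbrev TreeVertex (α : Type*) : Type _ := Fin 5 ⊕ (List α × Bool)

/-- The edge `E_σ`, which joins `σ₁` to the vertices `τ₀` of the children `τ` of `σ` in `T`. -/
def branchEdge (T : Set (List α)) (σ : List α) : Set (TreeVertex α) :=
  insert (Sum.inr (σ, true)) {v | ∃ a, σ ++ [a] ∈ T ∧ v = Sum.inr (σ ++ [a], false)}

/-- The edge `E₀`, which joins `a₀` and `b₀` to the vertices `σ₀` with `σ ∈ T` of length one. -/
def rootEdge (T : Set (List α)) : Set (TreeVertex α) :=
  insert (Sum.inl 0) (insert (Sum.inl 2) {v | ∃ σ ∈ T, σ.length = 1 ∧ v = Sum.inr (σ, false)})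

/-- The edges of the hypergraph of a set `T` of sequences; the gadget edges are the first four,
which contain only distinguished vertices. -/
def treeEdges (T : Set (List α)) : Set (Set (TreeVertex α)) :=
  { {Sum.inl 0, Sum.inl 1}, {Sum.inl 1, Sum.inl 4},
    {Sum.inl 2, Sum.inl 3}, {Sum.inl 3, Sum.inl 4} }
  ∪ {e | ∃ σ ∈ T, σ ≠ [] ∧ e = {Sum.inr (σ, false), Sum.inr (σ, true)}}
  ∪ {e | ∃ σ ∈ T, (∀ a, σ ++ [a] ∉ T) ∧ e = {Sum.inr (σ, true), Sum.inl 4}}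
  ∪ {e | ∃ σ ∈ T, (∃ a, σ ++ [a] ∈ T) ∧ e = branchEdge T σ}
  ∪ {rootEdge T}

theorem isProperOn_branchEdge_iff {f : TreeVertex α → C} {σ : List α} (hσ : ∃ a, σ ++ [a] ∈ T) :
    IsProperOn f (branchEdge T σ) ↔
      ∃ a, σ ++ [a] ∈ T ∧ f (Sum.inr (σ, true)) ≠ f (Sum.inr (σ ++ [a], false)) := by
  obtain ⟨a, ha⟩ := hσ
  have nontrivial : (branchEdge T σ).Nontrivial :=
    ⟨Sum.inr (σ, true), Or.inl rfl, Sum.inr (σ ++ [a], false), Or.inr ⟨a, ha, rfl⟩, by simp⟩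
  refine (isProperOn_insert_iff nontrivial).trans ⟨?_, ?_⟩
  · rintro ⟨_, ⟨b, hb, rfl⟩, hne⟩
    exact ⟨b, hb, hne⟩
  · rintro ⟨b, hb, hne⟩
    exact ⟨_, ⟨b, hb, rfl⟩, hne⟩

theorem isProperOn_rootEdge_iff {f : TreeVertex α → C} :
    IsProperOn f (rootEdge T) ↔
      f (Sum.inl 0) ≠ f (Sum.inl 2) ∨
        ∃ a, [a] ∈ T ∧ f (Sum.inl 0) ≠ f (Sum.inr ([a], false)) := by
  have nontrivial : (rootEdge T).Nontrivial :=
    ⟨Sum.inl 0, Or.inl rfl, Sum.inl 2, Or.inr (Or.inl rfl), by simp⟩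
  refine (isProperOn_insert_iff nontrivial).trans ?_
  rw [Set.exists_mem_insert]
  refine or_congr_right ⟨?_, ?_⟩
  · rintro ⟨_, ⟨σ, hσ, hlen, rfl⟩, hne⟩
    obtain ⟨a, rfl⟩ := List.length_eq_one_iff.1 hlen
    exact ⟨a, hσ, hne⟩
  · rintro ⟨a, ha, hne⟩
    exact ⟨_, ⟨[a], ha, rfl, rfl⟩, hne⟩

theorem isProperColoring_treeEdges_iff {f : TreeVertex α → C} :
    IsProperColoring (treeEdges T) f ↔
      (f (Sum.inl 0) ≠ f (Sum.inl 1) ∧ f (Sum.inl 1) ≠ f (Sum.inl 4) ∧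
        f (Sum.inl 2) ≠ f (Sum.inl 3) ∧ f (Sum.inl 3) ≠ f (Sum.inl 4)) ∧
      (∀ σ ∈ T, σ ≠ [] → f (Sum.inr (σ, false)) ≠ f (Sum.inr (σ, true))) ∧
      (∀ σ ∈ T, (∀ a, σ ++ [a] ∉ T) → f (Sum.inr (σ, true)) ≠ f (Sum.inl 4)) ∧
      (∀ σ ∈ T, (∃ a, σ ++ [a] ∈ T) →
        ∃ a, σ ++ [a] ∈ T ∧ f (Sum.inr (σ, true)) ≠ f (Sum.inr (σ ++ [a], false))) ∧
      (f (Sum.inl 0) ≠ f (Sum.inl 2) ∨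
        ∃ a, [a] ∈ T ∧ f (Sum.inl 0) ≠ f (Sum.inr ([a], false))) := by
  simp +contextual only [treeEdges, isProperColoring_union_iff, isProperColoring_family_iff,
    isProperColoring_insert_iff, isProperColoring_singleton_iff,
    isProperOn_branchEdge_iff, isProperOn_rootEdge_iff]
  simp [isProperOn_pair_iff, and_assoc]

theorem exists_path_of_isProperColoring {f : TreeVertex α → Fin 2} (nil_mem : [] ∈ T)
    (hf : IsProperColoring (treeEdges T) f) : ∃ p : ℕ → α, ∀ n, initialSegment p n ∈ T := by
  obtain ⟨⟨ha₀a₁, ha₁s, hb₀b₁, hb₁s⟩, hnode, hleaf, hbranch, hroot⟩ :=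
    isProperColoring_treeEdges_iff.1 hf
  have exists_child (σ : List α) (hσ : σ ∈ T)
      (hcolor : σ ≠ [] → f (Sum.inr (σ, false)) ≠ f (Sum.inl 4)) :
      ∃ a, σ ++ [a] ∈ T ∧ f (Sum.inr (σ ++ [a], false)) ≠ f (Sum.inl 4) := by
    obtain rfl | hne := eq_or_ne σ []
    · have a₀_eq_s : f (Sum.inl 0) = f (Sum.inl 4) := fin_two_eq_of_ne_of_ne ha₀a₁ ha₁s
      have b₀_eq_s : f (Sum.inl 2) = f (Sum.inl 4) := fin_two_eq_of_ne_of_ne hb₀b₁ hb₁s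
      obtain ⟨a, haT, ha⟩ := hroot.resolve_left (not_not.2 (a₀_eq_s.trans b₀_eq_s.symm))
      exact ⟨a, haT, fun h => ha (a₀_eq_s.trans h.symm)⟩
    · have σ₁_eq_s : f (Sum.inr (σ, true)) = f (Sum.inl 4) :=
        fin_two_eq_of_ne_of_ne (hnode σ hσ hne).symm (hcolor hne)
      have not_leaf : ∃ a, σ ++ [a] ∈ T := by
        by_contra! h
        exact hleaf σ hσ h σ₁_eq_s
      obtain ⟨a, haT, ha⟩ := hbranch σ hσ not_leaf
      exact ⟨a, haT, fun h => ha (σ₁_eq_s.trans h.symm)⟩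
  obtain ⟨p, hp⟩ := exists_forall_initialSegment_mem
    (M := {σ ∈ T | σ ≠ [] → f (Sum.inr (σ, false)) ≠ f (Sum.inl 4)})
    ⟨nil_mem, fun h => absurd rfl h⟩
    fun σ hσ => (exists_child σ hσ.1 hσ.2).imp fun _ h => ⟨h.1, fun _ => h.2⟩
  exact ⟨p, fun n => (hp n).1⟩

open Classical in
/-- The 2-coloring of the hypergraph that gives `σ₀` and `s` different colors exactly when `σ ∈ M`,
and `σ₁` and `s` different colors exactly when `σ ∉ M`. -/
noncomputable def coloringOf (M : Set (List α)) : TreeVertex α → Fin 2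
  | Sum.inl i => ![0, 1, 0, 1, 0] i
  | Sum.inr (σ, false) => if σ ∈ M then 1 else 0
  | Sum.inr (σ, true) => if σ ∈ M then 0 else 1

theorem isProperColoring_coloringOf (hMT : M ⊆ T) (nil_mem : [] ∈ M)
    (exists_append_mem : ∀ σ ∈ M, ∃ a, σ ++ [a] ∈ M)
    (mem_of_append_mem : ∀ σ a, σ ++ [a] ∈ M → σ ∈ M) :
    IsProperColoring (treeEdges T) (coloringOf M) := by
  refine isProperColoring_treeEdges_iff.2 ⟨by simp [coloringOf], fun σ _ _ => ?_,
    fun σ _ hleaf => ?_, fun σ _ ⟨a, ha⟩ => ?_, Or.inr ?_⟩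
  · by_cases hσ : σ ∈ M <;> simp [coloringOf, hσ]
  · have hσ : σ ∉ M := fun hσ =>
      let ⟨a, ha⟩ := exists_append_mem σ hσ
      hleaf a (hMT ha)
    simp [coloringOf, hσ]
  · by_cases hσ : σ ∈ M
    · obtain ⟨b, hb⟩ := exists_append_mem σ hσ
      exact ⟨b, hMT hb, by simp [coloringOf, hσ, hb]⟩
    · have haM : σ ++ [a] ∉ M := mt (mem_of_append_mem σ a) hσ
      exact ⟨a, ha, by simp [coloringOf, hσ, haM]⟩
  · obtain ⟨a, ha⟩ : ∃ a, [a] ∈ M := exists_append_mem [] nil_mem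
    exact ⟨a, hMT ha, by simp [coloringOf, ha]⟩

theorem isProperColoring_coloringOf_range_initialSegment {p : ℕ → α}
    (hp : ∀ n, initialSegment p n ∈ T) :
    IsProperColoring (treeEdges T) (coloringOf (Set.range (initialSegment p))) := by
  refine isProperColoring_coloringOf (Set.range_subset_iff.2 hp) ⟨0, initialSegment_zero p⟩ ?_
    fun _ _ => mem_range_initialSegment_of_append_singleton
  rintro _ ⟨n, rfl⟩
  exact ⟨p n, n + 1, initialSegment_succ p n⟩

theorem tree_coloring_general (nil_mem : [] ∈ T) :
    (∃ f : TreeVertex α → Fin 2, IsProperColoring (treeEdges T) f) ↔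
      ∃ p : ℕ → α, ∀ n, initialSegment p n ∈ T :=
  ⟨fun ⟨_, hf⟩ => exists_path_of_isProperColoring nil_mem hf,
    fun ⟨_, hp⟩ => ⟨_, isProperColoring_coloringOf_range_initialSegment hp⟩⟩

end TreeHypergraph

theorem tree_coloring (T : Set (List ℕ)) (hT : IsTree T) (hne : ([] : List ℕ) ∈ T)
    (E : Set (Set Vtx))
    (hE : E = ({ {Sum.inl 0, Sum.inl 1}, {Sum.inl 1, Sum.inl 4},
          {Sum.inl 2, Sum.inl 3}, {Sum.inl 3, Sum.inl 4} } : Set (Set Vtx))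
        ∪ {ed : Set Vtx | ∃ σ ∈ T, σ ≠ [] ∧
            ed = {Sum.inr (σ, false), Sum.inr (σ, true)}}
        ∪ {ed : Set Vtx | ∃ σ ∈ T, (∀ n : ℕ, σ ++ [n] ∉ T) ∧
            ed = {Sum.inr (σ, true), Sum.inl 4}}
        ∪ {ed : Set Vtx | ∃ σ ∈ T, (∃ n : ℕ, σ ++ [n] ∈ T) ∧
            ed = insert (Sum.inr (σ, true))
              {v : Vtx | ∃ n : ℕ, σ ++ [n] ∈ T ∧ v = Sum.inr (σ ++ [n], false)}}
        ∪ { insert (Sum.inl 0) (insert (Sum.inl 2)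
            {v : Vtx | ∃ σ ∈ T, σ.length = 1 ∧ v = Sum.inr (σ, false)}) }) :
    (∃ f : Vtx → Fin 2, ∀ ed ∈ E, (∃ u ∈ ed, ∃ v ∈ ed, u ≠ v) →
        ∃ u ∈ ed, ∃ v ∈ ed, u ≠ v ∧ f u ≠ f v) ↔
      ∃ p : ℕ → ℕ, IsPath T p := by
  subst hE
  exact tree_coloring_general hne
end
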